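/- arXiv:1104.5428 — 6 statements merged into one kernel-verified Lean document; each statement's English description precedes it below -/
import Mathlib

section
/- Let A be an n×n complex matrix and B an n×m complex matrix, and let the subspaces S_k be defined as in the context. Then S_n = ℂⁿ if and only if for every nonzero complex scalar λ there is no nonzero vector w ∈ ℂⁿ with wᵀA = λwᵀ and wᵀB = 0 (i.e., the Popov–Belevitch–Hautus condition rank[A − λI, B] = n holds for all λ ≠ 0). -/
open Matrix

/-- The subspaces `S_k` of the paper: `S_0 = range B` and
`S_{k+1} = A⁻¹(S_k) + S_0`, where `A⁻¹` denotes the preimage. -/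
def ctrlS {F : Type*} [Field F] {n m : ℕ} (A : Matrix (Fin n) (Fin n) F)
    (B : Matrix (Fin n) (Fin m) F) : ℕ → Submodule F (Fin n → F)
  | 0 => LinearMap.range B.mulVecLin
  | k + 1 => Submodule.comap A.mulVecLin (ctrlS A B k) ⊔ LinearMap.range B.mulVecLin

/-!
In the finite-dimensional space `V = Kⁿ`, the subspace `S_n` is the smallest `S` with `range B ≤ S`
and `A⁻¹(S) ≤ S`, since an increasing chain of subspaces generated by iterating a monotone map has
stabilized after `dim V` steps. So `S_n = V` fails exactly when some proper `S` has these two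
properties.

If `φ ≠ 0` kills `range B` and `φ ∘ A = λ φ` with `λ ≠ 0`, then `ker φ` is such an `S`. Conversely,
taking annihilators turns `A⁻¹(S) ≤ S` into `S^⊥ ≤ Aᵀ(S^⊥)`. Comparing dimensions, `Aᵀ` maps `S^⊥`
bijectively onto itself, so all its eigenvalues on `S^⊥` are nonzero, and one exists because `S^⊥`
is nonzero.
-/

open Function Module Module.End

section Iterate

variable {K V : Type*} [DivisionRing K] [AddCommGroup V] [Module K V] [FiniteDimensional K V]
  {Φ : Submodule K V → Submodule K V} {R : Submodule K V}

theorem isFixedPt_iterate_or_le_finrank (hΦ : Monotone Φ) (hR : R ≤ Φ R) (k : ℕ) :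
    IsFixedPt Φ (Φ^[k] R) ∨ k ≤ finrank K (Φ^[k] R : Submodule K V) := by
  induction k with
  | zero => exact .inr (Nat.zero_le _)
  | succ k ih =>
    by_cases hfix : IsFixedPt Φ (Φ^[k] R)
    · left
      rw [iterate_succ_apply', hfix.eq]
      exact hfix
    · right
      have hle : Φ^[k] R ≤ Φ^[k + 1] R := hΦ.monotone_iterate_of_le_map hR k.le_succ
      have hne : Φ^[k] R ≠ Φ^[k + 1] R := fun h =>
        hfix ((iterate_succ_apply' Φ k R).symm.trans h.symm)
      exact (ih.resolve_left hfix).trans_lt (Submodule.finrank_lt_finrank_of_lt (hle.lt_of_ne hne))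

theorem isFixedPt_iterate_finrank (hΦ : Monotone Φ) (hR : R ≤ Φ R) :
    IsFixedPt Φ (Φ^[finrank K V] R) := by
  refine (isFixedPt_iterate_or_le_finrank hΦ hR _).elim id fun hdim => ?_
  have htop : Φ^[finrank K V] R = ⊤ :=
    Submodule.eq_top_of_finrank_eq (le_antisymm (Submodule.finrank_le _) hdim)
  have hle : Φ^[finrank K V] R ≤ Φ (Φ^[finrank K V] R) := by
    rw [← iterate_succ_apply' Φ]
    exact hΦ.monotone_iterate_of_le_map hR (Nat.le_succ _)
  rw [htop] at hle ⊢
  exact top_le_iff.mp hle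

theorem isLeast_iterate_finrank (hΦ : Monotone Φ) (hR : R ≤ Φ R) :
    IsLeast {S | R ≤ S ∧ Φ S ≤ S} (Φ^[finrank K V] R) := by
  refine ⟨⟨hΦ.monotone_iterate_of_le_map hR (Nat.zero_le _), ?_⟩, ?_⟩
  · exact (isFixedPt_iterate_finrank hΦ hR).le
  · rintro S ⟨hRS, hS⟩
    exact (hΦ.iterate _ hRS).trans (hΦ.antitone_iterate_of_map_le hS (Nat.zero_le _))

end Iterate

/-- One step `S ↦ f⁻¹(S) + R` of the recursion defining the subspaces `S_k`, for an endomorphism `f`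
in place of the matrix `A` and a subspace `R` in place of `range B`. -/
def comapSup {K V : Type*} [Semiring K] [AddCommMonoid V] [Module K V] (f : End K V)
    (R S : Submodule K V) : Submodule K V :=
  S.comap f ⊔ R

theorem comapSup_mono {K V : Type*} [Semiring K] [AddCommMonoid V] [Module K V] (f : End K V)
    (R : Submodule K V) : Monotone (comapSup f R) :=
  fun _ _ h => sup_le_sup_right (Submodule.comap_mono h) R

theorem iterate_comapSup_eq_top_iff_forall {K V : Type*} [DivisionRing K] [AddCommGroup V]
    [Module K V] [FiniteDimensional K V] (f : End K V) (R : Submodule K V) :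
    (comapSup f R)^[finrank K V] R = ⊤ ↔ ∀ S, R ≤ S → S.comap f ≤ S → S = ⊤ := by
  have hleast := isLeast_iterate_finrank (comapSup_mono f R) le_sup_right
  constructor
  · intro htop S hRS hS
    exact top_le_iff.mp (htop.ge.trans (hleast.2 ⟨hRS, sup_le hS hRS⟩))
  · intro h
    exact h _ hleast.1.1 (le_sup_left.trans hleast.1.2)

theorem comap_ker_le_ker_of_hasEigenvector_dualMap {K V : Type*} [CommRing K] [NoZeroDivisors K]
    [AddCommGroup V] [Module K V] {f : End K V} {μ : K} {φ : Dual K V} (hμ : μ ≠ 0)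
    (hφ : HasEigenvector f.dualMap μ φ) : φ.ker.comap f ≤ φ.ker := by
  intro v hv
  have hfv : φ (f v) = μ * φ v := LinearMap.congr_fun hφ.apply_eq_smul v
  have hzero : μ * φ v = 0 := hfv ▸ hv
  exact (mul_eq_zero.mp hzero).resolve_left hμ

section Eigenvector

variable {K V : Type*} [Field K] [AddCommGroup V] [Module K V]

theorem exists_hasEigenvector_mem_of_le_map [IsAlgClosed K] {g : End K V} {W : Submodule K V}
    [FiniteDimensional K W] (hW : W ≠ ⊥) (hle : W ≤ W.map g) :
    ∃ μ ≠ 0, ∃ w ∈ W, HasEigenvector g μ w := by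
  have hmap : W = W.map g := Submodule.eq_of_le_of_finrank_le hle (Submodule.finrank_map_le g W)
  have hmaps : ∀ w ∈ W, g w ∈ W := fun w hw => hmap ▸ Submodule.mem_map_of_mem hw
  have hsurj : Surjective (g.restrict hmaps) := by
    rintro ⟨w, hw⟩
    obtain ⟨v, hv, rfl⟩ := hle hw
    exact ⟨⟨v, hv⟩, rfl⟩
  have hinj : Injective (g.restrict hmaps) := LinearMap.injective_iff_surjective.mpr hsurj
  have : Nontrivial W := Submodule.nontrivial_iff_ne_bot.mpr hW
  obtain ⟨μ, hμ⟩ := Module.End.exists_eigenvalue (g.restrict hmaps)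
  obtain ⟨w, hw⟩ := hμ.exists_hasEigenvector
  refine ⟨μ, ?_, w, w.2, ?_⟩
  · rintro rfl
    exact hw.2 (hinj (by rw [hw.apply_eq_smul, zero_smul, map_zero]))
  · refine hasEigenvector_iff.mpr ⟨?_, ?_⟩
    · exact mem_eigenspace_iff.mpr (congrArg Subtype.val hw.apply_eq_smul)
    · exact fun h => hw.2 (Subtype.ext h)

theorem dualAnnihilator_comap_eq_map_dualMap {V' : Type*} [AddCommGroup V'] [Module K V']
    (f : V →ₗ[K] V') (S : Submodule K V') :
    (S.comap f).dualAnnihilator = S.dualAnnihilator.map f.dualMap := by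
  rw [← S.ker_mkQ, ← LinearMap.ker_comp, ← LinearMap.range_dualMap_eq_dualAnnihilator_ker,
    ← LinearMap.range_dualMap_eq_dualAnnihilator_ker, ← LinearMap.range_comp,
    LinearMap.dualMap_comp_dualMap]

theorem exists_hasEigenvector_dualMap_of_comap_le [IsAlgClosed K] [FiniteDimensional K V]
    {f : End K V} {S : Submodule K V} (hS : S ≠ ⊤) (hle : S.comap f ≤ S) :
    ∃ μ ≠ 0, ∃ φ ∈ S.dualAnnihilator, HasEigenvector f.dualMap μ φ := by
  refine exists_hasEigenvector_mem_of_le_map (mt Submodule.dualAnnihilator_eq_bot_iff.mp hS) ?_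
  rw [← dualAnnihilator_comap_eq_map_dualMap]
  exact Submodule.dualAnnihilator_anti hle

theorem iterate_comapSup_eq_top_iff [IsAlgClosed K] [FiniteDimensional K V] (f : End K V)
    (R : Submodule K V) :
    (comapSup f R)^[finrank K V] R = ⊤ ↔
      ∀ μ : K, μ ≠ 0 → ¬∃ φ : Dual K V, HasEigenvector f.dualMap μ φ ∧ φ ∈ R.dualAnnihilator := by
  rw [iterate_comapSup_eq_top_iff_forall]
  constructor
  · rintro h μ hμ ⟨φ, hφ, hR⟩
    have hker : φ.ker = ⊤ := h _ (fun v hv => (Submodule.mem_dualAnnihilator φ).mp hR v hv)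
      (comap_ker_le_ker_of_hasEigenvector_dualMap hμ hφ)
    exact hφ.2 (LinearMap.ker_eq_top.mp hker)
  · intro h S hRS hS
    by_contra hne
    obtain ⟨μ, hμ, φ, hφS, hφ⟩ := exists_hasEigenvector_dualMap_of_comap_le hne hS
    exact h μ hμ ⟨φ, hφ, Submodule.dualAnnihilator_anti hRS hφS⟩

end Eigenvector

theorem ctrlS_eq_iterate_comapSup {F : Type*} [Field F] {n m : ℕ} (A : Matrix (Fin n) (Fin n) F)
    (B : Matrix (Fin n) (Fin m) F) (k : ℕ) :
    ctrlS A B k = (comapSup A.mulVecLin B.mulVecLin.range)^[k] B.mulVecLin.range := by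
  induction k with
  | zero => rfl
  | succ k ih => rw [iterate_succ_apply', ← ih]; rfl

section DotProduct

variable {ι κ : Type*} [Fintype ι] [DecidableEq ι]

theorem dualMap_mulVecLin_dotProductEquiv {F : Type*} [CommSemiring F] [Fintype κ] [DecidableEq κ]
    (M : Matrix ι κ F) (w : ι → F) :
    M.mulVecLin.dualMap (dotProductEquiv F ι w) = dotProductEquiv F κ (w ᵥ* M) :=
  LinearMap.ext fun v => dotProduct_mulVec w M v

theorem hasEigenvector_dualMap_mulVecLin_iff {F : Type*} [CommRing F] {A : Matrix ι ι F} {μ : F}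
    {w : ι → F} :
    HasEigenvector A.mulVecLin.dualMap μ (dotProductEquiv F ι w) ↔ w ≠ 0 ∧ w ᵥ* A = μ • w := by
  rw [hasEigenvector_iff, mem_eigenspace_iff, dualMap_mulVecLin_dotProductEquiv, ← map_smul,
    (dotProductEquiv F ι).injective.eq_iff, map_ne_zero_iff _ (dotProductEquiv F ι).injective,
    and_comm]

theorem dotProductEquiv_mem_dualAnnihilator_range_iff {F : Type*} [CommSemiring F] [Fintype κ]
    {B : Matrix ι κ F} {w : ι → F} :
    dotProductEquiv F ι w ∈ B.mulVecLin.range.dualAnnihilator ↔ w ᵥ* B = 0 := by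
  classical
  rw [← LinearMap.ker_dualMap_eq_dualAnnihilator_range, LinearMap.mem_ker,
    dualMap_mulVecLin_dotProductEquiv, LinearEquiv.map_eq_zero_iff]

end DotProduct

theorem stmt_0_general {F : Type*} [Field F] [IsAlgClosed F] {n m : ℕ}
    (A : Matrix (Fin n) (Fin n) F) (B : Matrix (Fin n) (Fin m) F) :
    ctrlS A B n = ⊤ ↔
      ∀ lam : F, lam ≠ 0 →
        ¬∃ w : Fin n → F, w ≠ 0 ∧ w ᵥ* A = lam • w ∧ w ᵥ* B = 0 := by
  have hiff := iterate_comapSup_eq_top_iff A.mulVecLin B.mulVecLin.range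
  rw [finrank_fin_fun, ← ctrlS_eq_iterate_comapSup] at hiff
  simp only [hiff, (dotProductEquiv F (Fin n)).surjective.exists,
    hasEigenvector_dualMap_mulVecLin_iff, dotProductEquiv_mem_dualAnnihilator_range_iff, and_assoc]

/-- `S_n = ℂⁿ` iff the PBH condition holds for all nonzero `λ`. -/
theorem stmt_0 {n m : ℕ} (A : Matrix (Fin n) (Fin n) ℂ) (B : Matrix (Fin n) (Fin m) ℂ) :
    ctrlS A B n = ⊤ ↔
      ∀ lam : ℂ, lam ≠ 0 →
        ¬∃ w : Fin n → ℂ, w ≠ 0 ∧ w ᵥ* A = lam • w ∧ w ᵥ* B = 0 :=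
  stmt_0_general A B
end

section
/- Let A be an n×n complex matrix, B an n×m complex matrix, λ a nonzero complex scalar, and w ∈ ℂⁿ a vector with wᵀA = λwᵀ and wᵀB = 0. If wᵀv = 0 for every v ∈ S_k, then wᵀv = 0 for every v ∈ S_{k+1}. -/
open Matrix

/-! For a left eigenvector `w` of `A` with nonzero eigenvalue, the hyperplane `w^⊥` is its own
preimage under `A`. Hence the recursion defining `S_k` never leaves `w^⊥` once it starts there,
and it does start there when `w` annihilates the range of `B`. -/

theorem comap_ker_eq_ker_of_comp_eq_smul {K V W : Type*} [Semifield K] [AddCommMonoid V]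
    [Module K V] [AddCommMonoid W] [Module K W] {f : V →ₗ[K] V} {φ : V →ₗ[K] W} {a : K}
    (ha : a ≠ 0) (hφ : φ ∘ₗ f = a • φ) :
    (LinearMap.ker φ).comap f = LinearMap.ker φ := by
  rw [← LinearMap.ker_comp, hφ, LinearMap.ker_smul φ a ha]

theorem dotProductBilin_comp_mulVecLin {R m n : Type*} [CommSemiring R] [Fintype m] [Fintype n]
    (w : m → R) (M : Matrix m n R) :
    dotProductBilin R R w ∘ₗ M.mulVecLin = dotProductBilin R R (w ᵥ* M) :=
  LinearMap.ext (dotProduct_mulVec w M)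

theorem ctrlS_le_ker {F W : Type*} [Field F] [AddCommMonoid W] [Module F W] {n m : ℕ}
    {A : Matrix (Fin n) (Fin n) F} {B : Matrix (Fin n) (Fin m) F} {φ : (Fin n → F) →ₗ[F] W}
    {a : F} (ha : a ≠ 0) (hA : φ ∘ₗ A.mulVecLin = a • φ) (hB : φ ∘ₗ B.mulVecLin = 0) (k : ℕ) :
    ctrlS A B k ≤ LinearMap.ker φ := by
  have range_le : LinearMap.range B.mulVecLin ≤ LinearMap.ker φ := LinearMap.range_le_ker_iff.mpr hB
  induction k with
  | zero => exact range_le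
  | succ k ih =>
    have comap_le : (ctrlS A B k).comap A.mulVecLin ≤ LinearMap.ker φ :=
      (Submodule.comap_mono ih).trans_eq (comap_ker_eq_ker_of_comp_eq_smul ha hA)
    exact sup_le comap_le range_le

theorem stmt_1_general {F : Type*} [Field F] {n m : ℕ} (A : Matrix (Fin n) (Fin n) F)
    (B : Matrix (Fin n) (Fin m) F) (lam : F) (hlam : lam ≠ 0) (w : Fin n → F)
    (hwA : w ᵥ* A = lam • w) (hwB : w ᵥ* B = 0) (k : ℕ) :
    ∀ v ∈ ctrlS A B k, w ⬝ᵥ v = 0 := by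
  have hA : dotProductBilin F F w ∘ₗ A.mulVecLin = lam • dotProductBilin F F w := by
    rw [dotProductBilin_comp_mulVecLin, hwA, map_smul]
  have hB : dotProductBilin F F w ∘ₗ B.mulVecLin = 0 := by
    rw [dotProductBilin_comp_mulVecLin, hwB, map_zero]
  exact fun _ hv => ctrlS_le_ker hlam hA hB k hv

/-- If `w` is a left eigenvector of `A` for a nonzero eigenvalue with `wᵀB = 0` and
`w ⊥ S_k`, then `w ⊥ S_{k+1}`. -/
theorem stmt_1 {n m : ℕ} (A : Matrix (Fin n) (Fin n) ℂ) (B : Matrix (Fin n) (Fin m) ℂ)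
    (lam : ℂ) (hlam : lam ≠ 0) (w : Fin n → ℂ)
    (hwA : w ᵥ* A = lam • w) (hwB : w ᵥ* B = 0) (k : ℕ)
    (hk : ∀ v ∈ ctrlS A B k, w ⬝ᵥ v = 0) :
    ∀ v ∈ ctrlS A B (k + 1), w ⬝ᵥ v = 0 :=
  stmt_1_general A B lam hlam w hwA hwB (k + 1)
end

section
/- Let A be an n×n complex matrix and B an n×m complex matrix. If S_n ≠ ℂⁿ, then there exist a nonzero complex scalar λ and a nonzero vector w ∈ ℂⁿ such that wᵀA = λwᵀ and wᵀB = 0. -/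
open Matrix

/-!
The subspaces `S_k` increase and stay constant after the first repetition, which dimension forces
by step `n`, so `S := S_n` contains both `range B` and the preimage `A⁻¹(S)`. As `A⁻¹(S) ⊆ S`, the
map `x ↦ A x mod S` into `Fⁿ / S` has rank at least `n - dim S`. Hence it is onto, that is
`range A + S = Fⁿ`, and comparing dimensions `A⁻¹(S) = S`. Thus the annihilator of `S`, which is
nonzero when `S ≠ Fⁿ`, is stable under the transpose of `A`, and the transpose is injective on it.
An eigenvector of this restriction is the required `w`; it annihilates `range B ⊆ S`.
-/

section FiniteDimensional

variable {K V : Type*} [DivisionRing K] [AddCommGroup V] [Module K V] [FiniteDimensional K V]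

theorem submodule_eq_of_monotone_of_finrank_le {S : ℕ → Submodule K V} (hmono : Monotone S)
    (hstab : ∀ k, S k = S (k + 1) → S (k + 1) = S (k + 2)) {k l : ℕ}
    (hk : Module.finrank K V ≤ k) (hkl : k ≤ l) : S k = S l := by
  have eq_succ_of_finrank_eq (i : ℕ)
      (hi : Module.finrank K (S i) = Module.finrank K (S (i + 1))) : S i = S (i + 1) :=
    Submodule.eq_of_le_of_finrank_eq (hmono i.le_succ) hi
  have finrank_eq {i : ℕ} (hi : Module.finrank K V ≤ i) :
      Module.finrank K (S i) = Module.finrank K (S (Module.finrank K V)) :=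
    Nat.stabilises_of_monotone (f := fun i => Module.finrank K (S i))
      (fun _ _ hij => Submodule.finrank_mono (hmono hij)) (fun i => (S i).finrank_le)
      (fun i hi => congrArg (fun T : Submodule K V => Module.finrank K T)
        (hstab i (eq_succ_of_finrank_eq i hi))) hi
  exact Submodule.eq_of_le_of_finrank_eq (hmono hkl)
    ((finrank_eq hk).trans (finrank_eq (hk.trans hkl)).symm)

theorem finrank_range_mkQ_comp_add_finrank_comap {W : Type*} [AddCommGroup W]
    [Module K W] (f : V →ₗ[K] W) (S : Submodule K W) :
    Module.finrank K (LinearMap.range (S.mkQ ∘ₗ f)) + Module.finrank K (S.comap f) =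
      Module.finrank K V := by
  have rank_nullity := (S.mkQ ∘ₗ f).finrank_range_add_finrank_ker
  rwa [LinearMap.ker_comp, Submodule.ker_mkQ] at rank_nullity

variable {f : V →ₗ[K] V} {S : Submodule K V}

theorem sup_range_eq_top_of_comap_le (h : S.comap f ≤ S) : S ⊔ LinearMap.range f = ⊤ := by
  have range_mkQ_comp_eq_top : LinearMap.range (S.mkQ ∘ₗ f) = ⊤ := by
    apply Submodule.eq_top_of_finrank_eq
    have := finrank_range_mkQ_comp_add_finrank_comap f S
    have := S.finrank_quotient_add_finrank
    have := Submodule.finrank_mono h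
    have := (LinearMap.range (S.mkQ ∘ₗ f)).finrank_le
    omega
  rwa [LinearMap.range_comp, Submodule.map_mkQ_eq_top] at range_mkQ_comp_eq_top

theorem comap_eq_self_of_comap_le (h : S.comap f ≤ S) : S.comap f = S := by
  apply Submodule.eq_of_le_of_finrank_le h
  have := finrank_range_mkQ_comp_add_finrank_comap f S
  have := S.finrank_quotient_add_finrank
  have := (LinearMap.range (S.mkQ ∘ₗ f)).finrank_le
  omega

end FiniteDimensional

section Dual

variable {K V : Type*} [Field K] [AddCommGroup V] [Module K V] [FiniteDimensional K V]
  {f : V →ₗ[K] V} {S : Submodule K V}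

theorem dualMap_mem_dualAnnihilator_of_comap_le (h : S.comap f ≤ S) {φ : Module.Dual K V}
    (hφ : φ ∈ S.dualAnnihilator) : f.dualMap φ ∈ S.dualAnnihilator := by
  have mem_comap := Submodule.dualAnnihilator_map_dualMap_le S f (Submodule.mem_map_of_mem hφ)
  rwa [comap_eq_self_of_comap_le h] at mem_comap

theorem disjoint_dualAnnihilator_ker_dualMap_of_comap_le (h : S.comap f ≤ S) :
    Disjoint S.dualAnnihilator (LinearMap.ker f.dualMap) := by
  rw [disjoint_iff, LinearMap.ker_dualMap_eq_dualAnnihilator_range,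
    ← Submodule.dualAnnihilator_sup_eq, sup_range_eq_top_of_comap_le h,
    Submodule.dualAnnihilator_top]

theorem exists_hasEigenvector_dualMap_mem_dualAnnihilator [IsAlgClosed K] (hS : S ≠ ⊤)
    (h : S.comap f ≤ S) :
    ∃ μ : K, μ ≠ 0 ∧ ∃ φ ∈ S.dualAnnihilator, Module.End.HasEigenvector f.dualMap μ φ := by
  have : Nontrivial S.dualAnnihilator :=
    Submodule.nontrivial_iff_ne_bot.mpr (mt Submodule.dualAnnihilator_eq_bot_iff.mp hS)
  obtain ⟨μ, hμ⟩ := Module.End.exists_eigenvalue (V := S.dualAnnihilator)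
    (f.dualMap.restrict fun _ => dualMap_mem_dualAnnihilator_of_comap_le h)
  obtain ⟨⟨φ, hφ⟩, hφμ⟩ := hμ.exists_hasEigenvector
  have φ_ne_zero : φ ≠ 0 := fun h0 => hφμ.2 (Subtype.ext h0)
  have apply_φ : f.dualMap φ = μ • φ := congrArg Subtype.val hφμ.apply_eq_smul
  refine ⟨μ, ?_, φ, hφ, Module.End.mem_eigenspace_iff.mpr apply_φ, φ_ne_zero⟩
  rintro rfl
  have φ_mem_ker : φ ∈ LinearMap.ker f.dualMap := by rw [LinearMap.mem_ker, apply_φ, zero_smul]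
  exact φ_ne_zero
    (Submodule.disjoint_def.mp (disjoint_dualAnnihilator_ker_dualMap_of_comap_le h) φ hφ φ_mem_ker)

end Dual

section DotProduct

variable {R m n : Type*} [CommSemiring R] [Fintype m] [DecidableEq m] [Fintype n]

theorem dotProductEquiv_vecMul [DecidableEq n] (w : m → R) (M : Matrix m n R) :
    dotProductEquiv R n (w ᵥ* M) = M.mulVecLin.dualMap (dotProductEquiv R m w) :=
  LinearMap.ext fun x => (dotProduct_mulVec w M x).symm

theorem vecMul_eq_zero_iff_mem_dualAnnihilator (w : m → R) (M : Matrix m n R) :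
    w ᵥ* M = 0 ↔ dotProductEquiv R m w ∈ (LinearMap.range M.mulVecLin).dualAnnihilator := by
  classical
  rw [← LinearMap.ker_dualMap_eq_dualAnnihilator_range, LinearMap.mem_ker,
    ← dotProductEquiv_vecMul, LinearEquiv.map_eq_zero_iff]

end DotProduct

section ctrlS

variable {F : Type*} [Field F] {n m : ℕ} (A : Matrix (Fin n) (Fin n) F)
  (B : Matrix (Fin n) (Fin m) F)

theorem ctrlS_monotone : Monotone (ctrlS A B) := by
  refine monotone_nat_of_le_succ fun k => ?_
  induction k with
  | zero => exact le_sup_right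
  | succ k ih => exact sup_le_sup_right (Submodule.comap_mono ih) _

theorem range_mulVecLin_le_ctrlS (k : ℕ) : LinearMap.range B.mulVecLin ≤ ctrlS A B k :=
  ctrlS_monotone A B k.zero_le

theorem comap_ctrlS_le {k : ℕ} (hk : n ≤ k) : (ctrlS A B k).comap A.mulVecLin ≤ ctrlS A B k := by
  have stabilises : ctrlS A B k = ctrlS A B (k + 1) :=
    submodule_eq_of_monotone_of_finrank_le (ctrlS_monotone A B)
      (fun i hi => by rw [ctrlS, ctrlS, hi])
      ((Module.finrank_fin_fun F).trans_le hk) k.le_succ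
  exact le_sup_left.trans stabilises.ge

end ctrlS

theorem stmt_6_general {K : Type*} [Field K] [IsAlgClosed K] {n m : ℕ}
    (A : Matrix (Fin n) (Fin n) K) (B : Matrix (Fin n) (Fin m) K) (h : ctrlS A B n ≠ ⊤) :
    ∃ lam : K, lam ≠ 0 ∧ ∃ w : Fin n → K, w ≠ 0 ∧ w ᵥ* A = lam • w ∧ w ᵥ* B = 0 := by
  obtain ⟨lam, hlam, φ, hφ, eigenvector⟩ :=
    exists_hasEigenvector_dualMap_mem_dualAnnihilator h (comap_ctrlS_le A B le_rfl)
  obtain ⟨w, rfl⟩ := (dotProductEquiv K (Fin n)).surjective φ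
  refine ⟨lam, hlam, w, ?_, ?_, ?_⟩
  · exact (LinearEquiv.map_ne_zero_iff _).mp eigenvector.2
  · apply (dotProductEquiv K (Fin n)).injective
    rw [dotProductEquiv_vecMul, map_smul, eigenvector.apply_eq_smul]
  · rw [vecMul_eq_zero_iff_mem_dualAnnihilator]
    exact Submodule.dualAnnihilator_anti (range_mulVecLin_le_ctrlS A B n) hφ

/-- If `S_n ≠ ℂⁿ` then there is a nonzero left eigenvector of `A` for a nonzero
eigenvalue that also annihilates `B`. -/
theorem stmt_6 {n m : ℕ} (A : Matrix (Fin n) (Fin n) ℂ) (B : Matrix (Fin n) (Fin m) ℂ)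
    (h : ctrlS A B n ≠ ⊤) :
    ∃ lam : ℂ, lam ≠ 0 ∧ ∃ w : Fin n → ℂ, w ≠ 0 ∧ w ᵥ* A = lam • w ∧ w ᵥ* B = 0 :=
  stmt_6_general A B h
end

section
/- Consider the linear system with state space X = ℝⁿ, input space U = ℝᵐ, f(x) := Ax and μ(x,u) := x + Bu, where A is an n×n real matrix and B an n×m real matrix. Then for every x ∈ ℝⁿ and every k ≥ 0, the classes satisfy [x]_{-k} = x + S_k (the coset of the subspace S_k) and [x]_{-k}^- = x + A⁻¹(S_k). -/
/-- The classes `[x]_{-k}` of the paper: `[x]_0 = μ(x,U)` and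
`[x]_{-k-1} = μ([x]_{-k}^-, U)` where `[x]_{-k}^- = f⁻¹([f(x)]_{-k})`. -/
def cls {X U : Type*} (f : X → X) (μ : X → U → X) : ℕ → X → Set X
  | 0, x => Set.range (μ x)
  | k + 1, x => ⋃ y ∈ f ⁻¹' cls f μ k (f x), Set.range (μ y)

/-- The classes `[x]_{-k}^- = f⁻¹([f(x)]_{-k})` of the paper. -/
def clsm {X U : Type*} (f : X → X) (μ : X → U → X) (k : ℕ) (x : X) : Set X :=
  f ⁻¹' cls f μ k (f x)

/-- The classes `[x]_j^-` for integer indices `j ≤ 1`: `[x]_1^- = {x}` and,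
for `j ≤ 0`, `[x]_j^- = [x]_{-(-j)}^-`. -/
def clsI {X U : Type*} (f : X → X) (μ : X → U → X) (j : ℤ) (x : X) : Set X :=
  if j = 1 then {x} else clsm f μ (-j).toNat x

/-- The map `π(x̂,x) = max { j ∈ {2-p,…,0,1} : [x̂]_0 ∩ [x]_j^- ≠ ∅ }`. -/
noncomputable def piMap {X U : Type*} (f : X → X) (μ : X → U → X) (p : ℕ)
    (xhat x : X) : ℤ :=
  sSup {j : ℤ | 2 - (p : ℤ) ≤ j ∧ j ≤ 1 ∧ (cls f μ 0 xhat ∩ clsI f μ j x).Nonempty}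

open Matrix

section AdditiveInput

open scoped Pointwise

theorem cls_zero_eq_vadd_range {X U : Type*} [Add X] (f : X → X) (b : U → X) (x : X) :
    cls f (fun y u => y + b u) 0 x = x +ᵥ Set.range b :=
  (Set.vadd_set_range x b).symm

theorem cls_succ_eq_clsm_add_range {X U : Type*} [Add X] (f : X → X) (b : U → X) (k : ℕ) (x : X) :
    cls f (fun y u => y + b u) (k + 1) x =
      clsm f (fun y u => y + b u) k x + Set.range b :=
  calc
    cls f (fun y u => y + b u) (k + 1) x
      = ⋃ y ∈ clsm f (fun y u => y + b u) k x, y +ᵥ Set.range b :=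
        Set.iUnion₂_congr fun y _ => (Set.vadd_set_range y b).symm
    _ = clsm f (fun y u => y + b u) k x + Set.range b := Set.iUnion_vadd_set _ _

theorem preimage_map_vadd_addSubgroup {G H : Type*} [AddGroup G] [AddGroup H]
    (f : G →+ H) (S : AddSubgroup H) (x : G) :
    f ⁻¹' (f x +ᵥ (S : Set H)) = x +ᵥ (S.comap f : Set G) := by
  ext y
  simp only [Set.mem_preimage, Set.mem_vadd_set_iff_neg_vadd_mem, vadd_eq_add, SetLike.mem_coe,
    AddSubgroup.mem_comap, map_add, map_neg]

section LinearMap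

variable {R M : Type*} [Ring R] [AddCommGroup M] [Module R M] {f : M →ₗ[R] M}

theorem clsm_eq_vadd_comap {U : Type*} {μ : M → U → M} {k : ℕ} {S : Submodule R M} {x : M}
    (h : cls f μ k (f x) = f x +ᵥ (S : Set M)) :
    clsm f μ k x = x +ᵥ (S.comap f : Set M) := by
  rw [clsm, h]
  exact preimage_map_vadd_addSubgroup f.toAddMonoidHom S.toAddSubgroup x

variable {N : Type*} [AddCommGroup N] [Module R N] {b : N →ₗ[R] M}

theorem cls_eq_vadd_submodule {S : ℕ → Submodule R M} (hS_zero : S 0 = b.range)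
    (hS_succ : ∀ k, S (k + 1) = (S k).comap f ⊔ b.range) (k : ℕ) (x : M) :
    cls f (fun y u => y + b u) k x = x +ᵥ (S k : Set M) := by
  induction k generalizing x with
  | zero => rw [cls_zero_eq_vadd_range, hS_zero, LinearMap.coe_range]
  | succ k ih =>
    calc
      cls f (fun y u => y + b u) (k + 1) x
        = clsm f (fun y u => y + b u) k x + Set.range b := cls_succ_eq_clsm_add_range f b k x
      _ = (x +ᵥ ((S k).comap f : Set M)) + Set.range b := by rw [clsm_eq_vadd_comap (ih (f x))]
      _ = x +ᵥ (((S k).comap f : Set M) + Set.range b) := vadd_add_assoc ..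
      _ = x +ᵥ (S (k + 1) : Set M) := by
        rw [hS_succ, Submodule.coe_sup, LinearMap.coe_range]

theorem stmt_8_general {S : ℕ → Submodule R M} (hS_zero : S 0 = b.range)
    (hS_succ : ∀ k, S (k + 1) = (S k).comap f ⊔ b.range) (x : M) (k : ℕ) :
    cls f (fun y u => y + b u) k x = x +ᵥ (S k : Set M) ∧
      clsm f (fun y u => y + b u) k x = x +ᵥ ((S k).comap f : Set M) :=
  have hcls := cls_eq_vadd_submodule hS_zero hS_succ k
  ⟨hcls x, clsm_eq_vadd_comap (hcls (f x))⟩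

end LinearMap

end AdditiveInput

/-- For the linear system `f(x) = Ax`, `μ(x,u) = x + Bu`, the classes satisfy
`[x]_{-k} = x + S_k` and `[x]_{-k}^- = x + A⁻¹(S_k)`. -/
theorem stmt_8 {n m : ℕ} (A : Matrix (Fin n) (Fin n) ℝ) (B : Matrix (Fin n) (Fin m) ℝ)
    (x : Fin n → ℝ) (k : ℕ) :
    cls (fun y => A.mulVec y) (fun y u => y + B.mulVec u) k x =
        {y : Fin n → ℝ | ∃ s ∈ ctrlS A B k, y = x + s} ∧
      clsm (fun y => A.mulVec y) (fun y u => y + B.mulVec u) k x =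
        {y : Fin n → ℝ | ∃ z : Fin n → ℝ, A.mulVec z ∈ ctrlS A B k ∧ y = x + z} := by
  simpa only [← Set.image_vadd, Set.image, vadd_eq_add, @eq_comm _ (x + _), SetLike.mem_coe,
    Submodule.mem_comap, coe_mulVecLin] using
    stmt_8_general (f := A.mulVecLin) (b := B.mulVecLin) (S := ctrlS A B) rfl (fun _ => rfl) x k
end

section
/- Consider the linear system with state space X = ℝⁿ, input space U = ℝᵐ, f(x) := Ax and μ(x,u) := x + Bu, where A is an n×n real matrix and B an n×m real matrix. Then Assumption 1 holds (i.e., there exists p ≥ 1 such that [x]_{1-p} = ℝⁿ for all x ∈ ℝⁿ) if and only if S_n = ℝⁿ; moreover when S_n = ℝⁿ, Assumption 1 holds with p = n + 1. -/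
open Matrix

/-!
Write `S_k` for `ctrlSubmodule f (range b) k`. Linearity of `f` makes the class `[x]_{-k}` the
translate `x + S_k`, so Assumption 1 says that some `S_k` is the whole space. The `S_k` increase,
and each is determined by its predecessor, so the chain is constant as soon as two consecutive terms
agree; as dimensions strictly grow until then, this happens by `k = dim E`.
-/

section Ring

variable {R E U : Type*} [Ring R] [AddCommGroup E] [Module R E]

/-- The submodules `S_0 = W`, `S_{k+1} = f⁻¹(S_k) + W`: the coordinate-free form of `ctrlS`, with
an arbitrary submodule `W` in place of the range of the input map. -/
def ctrlSubmodule (f : E →ₗ[R] E) (W : Submodule R E) : ℕ → Submodule R E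
  | 0 => W
  | k + 1 => (ctrlSubmodule f W k).comap f ⊔ W

theorem ctrlSubmodule_monotone (f : E →ₗ[R] E) (W : Submodule R E) :
    Monotone (ctrlSubmodule f W) := by
  refine monotone_nat_of_le_succ fun k => ?_
  induction k with
  | zero => exact le_sup_right
  | succ k ih => exact sup_le_sup_right (Submodule.comap_mono ih) W

theorem ctrlSubmodule_succ_congr (f : E →ₗ[R] E) (W : Submodule R E) {j k : ℕ}
    (h : ctrlSubmodule f W j = ctrlSubmodule f W k) :
    ctrlSubmodule f W (j + 1) = ctrlSubmodule f W (k + 1) := by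
  simp only [ctrlSubmodule, h]

variable [AddCommGroup U] [Module R U] (f : E →ₗ[R] E) (b : U →ₗ[R] E)

theorem mem_cls_iff_sub_mem_ctrlSubmodule (k : ℕ) (x z : E) :
    z ∈ cls f (fun y u => y + b u) k x ↔ z - x ∈ ctrlSubmodule f (LinearMap.range b) k := by
  induction k generalizing x z with
  | zero => simp only [cls, ctrlSubmodule, Set.mem_range, LinearMap.mem_range, eq_sub_iff_add_eq']
  | succ k ih =>
    simp only [cls, ctrlSubmodule, Set.mem_iUnion, Set.mem_preimage, ih, ← map_sub, exists_prop,
      Set.mem_range, Submodule.mem_sup, Submodule.mem_comap, LinearMap.mem_range,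
      exists_exists_eq_and]
    constructor
    · rintro ⟨y, hy, u, rfl⟩
      exact ⟨y - x, hy, u, by abel⟩
    · rintro ⟨w, hw, u, hwu⟩
      refine ⟨x + w, by rwa [add_sub_cancel_left], u, ?_⟩
      rw [add_assoc, hwu, add_sub_cancel]

theorem forall_cls_eq_univ_iff_ctrlSubmodule_eq_top (k : ℕ) :
    (∀ x, cls f (fun y u => y + b u) k x = Set.univ) ↔
      ctrlSubmodule f (LinearMap.range b) k = ⊤ := by
  simp only [Set.eq_univ_iff_forall, mem_cls_iff_sub_mem_ctrlSubmodule, Submodule.eq_top_iff']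
  exact ⟨fun h z => sub_zero z ▸ h 0 z, fun h x z => h (z - x)⟩

end Ring

section DivisionRing

variable {K E U : Type*} [DivisionRing K] [AddCommGroup E] [Module K E] [FiniteDimensional K E]

theorem submodule_stabilises_of_monotone {S : ℕ → Submodule K E} (hS : Monotone S)
    (hstab : ∀ k, S k = S (k + 1) → S (k + 1) = S (k + 2)) {k : ℕ}
    (hk : Module.finrank K E ≤ k) : S k = S (Module.finrank K E) := by
  refine (Submodule.eq_of_le_of_finrank_eq (hS hk) (Eq.symm ?_)).symm
  refine Nat.stabilises_of_monotone (f := fun j => Module.finrank K (S j))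
    (fun _ _ hij => Submodule.finrank_mono (hS hij)) (fun j => (S j).finrank_le) ?_ hk
  intro j hj
  have hSj : S j = S (j + 1) := Submodule.eq_of_le_of_finrank_eq (hS j.le_succ) hj
  exact congrArg (fun T : Submodule K E => Module.finrank K T) (hstab j hSj)

theorem ctrlSubmodule_le_finrank (f : E →ₗ[K] E) (W : Submodule K E) (k : ℕ) :
    ctrlSubmodule f W k ≤ ctrlSubmodule f W (Module.finrank K E) := by
  have hmono := ctrlSubmodule_monotone f W
  rcases le_total k (Module.finrank K E) with hk | hk
  · exact hmono hk
  · exact (submodule_stabilises_of_monotone hmono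
      (fun _ => ctrlSubmodule_succ_congr f W) hk).le

theorem stmt_9_general [AddCommGroup U] [Module K U] (f : E →ₗ[K] E) (b : U →ₗ[K] E) :
    ((∃ p : ℕ, 1 ≤ p ∧ ∀ x, cls f (fun y u => y + b u) (p - 1) x = Set.univ) ↔
      ctrlSubmodule f (LinearMap.range b) (Module.finrank K E) = ⊤) ∧
    (ctrlSubmodule f (LinearMap.range b) (Module.finrank K E) = ⊤ → ∀ x,
      cls f (fun y u => y + b u) (Module.finrank K E + 1 - 1) x = Set.univ) := by
  simp only [forall_cls_eq_univ_iff_ctrlSubmodule_eq_top, Nat.add_sub_cancel]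
  refine ⟨⟨?_, fun htop => ⟨_, Nat.le_add_left 1 _, htop⟩⟩, id⟩
  rintro ⟨p, -, hp⟩
  exact top_le_iff.mp (hp ▸ ctrlSubmodule_le_finrank f (LinearMap.range b) (p - 1))

end DivisionRing

theorem ctrlS_eq_ctrlSubmodule {F : Type*} [Field F] {n m : ℕ} (A : Matrix (Fin n) (Fin n) F)
    (B : Matrix (Fin n) (Fin m) F) (k : ℕ) :
    ctrlS A B k = ctrlSubmodule A.mulVecLin (LinearMap.range B.mulVecLin) k := by
  induction k with
  | zero => rfl
  | succ k ih => rw [ctrlS, ctrlSubmodule, ih]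

/-- For the linear system `f(x) = Ax`, `μ(x,u) = x + Bu`, Assumption 1
(there is `p ≥ 1` with `[x]_{1-p} = ℝⁿ` for all `x`) holds iff `S_n = ℝⁿ`;
moreover when `S_n = ℝⁿ` Assumption 1 holds with `p = n + 1`. -/
theorem stmt_9 {n m : ℕ} (A : Matrix (Fin n) (Fin n) ℝ) (B : Matrix (Fin n) (Fin m) ℝ) :
    ((∃ p : ℕ, 1 ≤ p ∧ ∀ x : Fin n → ℝ,
        cls (fun y => A.mulVec y) (fun y u => y + B.mulVec u) (p - 1) x = Set.univ) ↔
      ctrlS A B n = ⊤) ∧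
    (ctrlS A B n = ⊤ → ∀ x : Fin n → ℝ,
        cls (fun y => A.mulVec y) (fun y u => y + B.mulVec u) ((n + 1) - 1) x = Set.univ) := by
  simpa only [ctrlS_eq_ctrlSubmodule, Module.finrank_fin_fun, coe_mulVecLin] using
    stmt_9_general A.mulVecLin B.mulVecLin
end

section
/- Let A be an n×n real matrix and B ∈ ℝⁿ (an n×1 matrix) with n ≥ 2, and suppose (A,B) is a controllable pair, i.e., rank[B, AB, …, A^{n−1}B] = n. Then S_{n−1} = ℝⁿ; equivalently, S_0 + A⁻¹(S_{n−2}) = ℝⁿ, so that for all x, x̂ ∈ ℝⁿ the intersection (x̂ + S_0) ∩ (x + A⁻¹(S_{n−2})) is nonempty. -/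
open Matrix

/-!
The modular law for preimages, `f⁻¹(U + f(W)) = f⁻¹(U) + W`, turns the recursion for `S_k` into the
closed form `S_k = A⁻ᵏ(R_{k+1})`, where `R_k = range B + range AB + ⋯ + range Aᵏ⁻¹B` is the
reachable subspace and `A⁻ᵏ` is the preimage under `Aᵏ`. Thus `S_k` is everything as soon as
`range Aᵏ ≤ R_{k+1}`, and controllability says that `R_n` is the whole space.
-/

section Submodule

variable {R M N : Type*} [Ring R] [AddCommGroup M] [Module R M] [AddCommGroup N] [Module R N]

theorem comap_sup_map (f : M →ₗ[R] N) (U : Submodule R N) (W : Submodule R M) :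
    (U ⊔ W.map f).comap f = U.comap f ⊔ W := by
  apply le_antisymm
  · intro v hv
    obtain ⟨u, hu, _, ⟨w, hw, rfl⟩, huw⟩ := Submodule.mem_sup.1 hv
    have hvw : f (v - w) = u := by rw [map_sub, ← huw, add_sub_cancel_right]
    exact Submodule.mem_sup.2 ⟨v - w, by rwa [Submodule.mem_comap, hvw], w, hw, sub_add_cancel v w⟩
  · exact sup_le (Submodule.comap_mono le_sup_left) (Submodule.map_le_iff_le_comap.1 le_sup_right)

theorem exists_add_eq_add_of_codisjoint {U W : Submodule R M} (h : Codisjoint U W) (x y : M) :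
    ∃ u ∈ U, ∃ w ∈ W, x + u = y + w := by
  obtain ⟨u, w, hu, hw, huw⟩ := Submodule.codisjoint_iff_exists_add_eq.1 h (y - x)
  refine ⟨u, hu, -w, W.neg_mem hw, ?_⟩
  rw [← sub_eq_add_neg, eq_sub_iff_add_eq, add_assoc, huw, add_sub_cancel]

end Submodule

section Reachability

variable {R ι κ : Type*} [CommSemiring R] [Fintype ι] [DecidableEq ι] [Fintype κ]

/-- The subspace of states that the system `x ↦ A x + B u` can reach from the origin in `k` steps,
namely `range B + range AB + ⋯ + range Aᵏ⁻¹B`. -/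
def reachableSubspace (A : Matrix ι ι R) (B : Matrix ι κ R) (k : ℕ) : Submodule R (ι → R) :=
  ⨆ j < k, LinearMap.range (A ^ j * B).mulVecLin

/-- The Kalman controllability matrix `[B, AB, …, Aᵏ⁻¹B]`; the index `(j, c)` stands for column `c`
of the block `Aʲ B`. -/
def controllabilityMatrix (A : Matrix ι ι R) (B : Matrix ι κ R) (k : ℕ) :
    Matrix ι (Fin k × κ) R :=
  of fun i p => (A ^ (p.1 : ℕ) * B) i p.2

theorem reachableSubspace_one (A : Matrix ι ι R) (B : Matrix ι κ R) :
    reachableSubspace A B 1 = LinearMap.range B.mulVecLin := by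
  simp [reachableSubspace]

theorem reachableSubspace_succ (A : Matrix ι ι R) (B : Matrix ι κ R) (k : ℕ) :
    reachableSubspace A B (k + 1) =
      reachableSubspace A B k ⊔ (LinearMap.range B.mulVecLin).map (A ^ k).mulVecLin := by
  rw [reachableSubspace, Nat.iSup_lt_succ, mulVecLin_mul, LinearMap.range_comp, reachableSubspace]

theorem range_controllabilityMatrix (A : Matrix ι ι R) (B : Matrix ι κ R) (k : ℕ) :
    LinearMap.range (controllabilityMatrix A B k).mulVecLin = reachableSubspace A B k := by
  have hcol (p : Fin k × κ) :
      (controllabilityMatrix A B k).col p = (A ^ (p.1 : ℕ) * B).col p.2 := rfl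
  simp only [reachableSubspace, range_mulVecLin, Submodule.span_range_eq_iSup, hcol,
    iSup_prod, iSup_subtype']
  exact Fin.equivSubtype.iSup_comp
    (g := fun j : {j // j < k} => ⨆ c, Submodule.span R {(A ^ (j : ℕ) * B).col c})

theorem rank_controllabilityMatrix_of_single_input (A : Matrix ι ι R) (B : Matrix ι (Fin 1) R)
    (k : ℕ) :
    (controllabilityMatrix A B k).rank = (of fun i (j : Fin k) => (A ^ (j : ℕ) * B) i 0).rank :=
  (rank_submatrix _ (.refl ι) (Equiv.prodUnique (Fin k) (Fin 1)).symm).symm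

theorem reachableSubspace_eq_top_of_rank {F : Type*} [Field F] {A : Matrix ι ι F}
    {B : Matrix ι κ F} {k : ℕ} (h : (controllabilityMatrix A B k).rank = Fintype.card ι) :
    reachableSubspace A B k = ⊤ := by
  rw [← range_controllabilityMatrix]
  exact Submodule.eq_top_of_finrank_eq (h.trans (Module.finrank_fintype_fun_eq_card F).symm)

end Reachability

section Field

variable {F : Type*} [Field F] {n m : ℕ} {A : Matrix (Fin n) (Fin n) F}
  {B : Matrix (Fin n) (Fin m) F}

theorem ctrlS_eq_comap_pow (A : Matrix (Fin n) (Fin n) F) (B : Matrix (Fin n) (Fin m) F) (k : ℕ) :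
    ctrlS A B k = (reachableSubspace A B (k + 1)).comap (A ^ k).mulVecLin := by
  induction k with
  | zero => simp [ctrlS, reachableSubspace_one]
  | succ k ih =>
    rw [ctrlS, ih, reachableSubspace_succ A B (k + 1), comap_sup_map, ← Submodule.comap_comp,
      ← mulVecLin_mul, ← pow_succ]

theorem ctrlS_eq_top_iff {k : ℕ} :
    ctrlS A B k = ⊤ ↔ LinearMap.range (A ^ k).mulVecLin ≤ reachableSubspace A B (k + 1) := by
  rw [ctrlS_eq_comap_pow, LinearMap.range_le_iff_comap]

theorem stmt_18_general {k : ℕ}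
    (hrange : LinearMap.range (A ^ (k + 1)).mulVecLin ≤ reachableSubspace A B (k + 2)) :
    ctrlS A B (k + 1) = ⊤ ∧
      Submodule.comap A.mulVecLin (ctrlS A B k) ⊔ ctrlS A B 0 = ⊤ ∧
      ∀ x xhat : Fin n → F,
        ({y : Fin n → F | ∃ s ∈ ctrlS A B 0, y = xhat + s} ∩
          {y : Fin n → F | ∃ z : Fin n → F, A.mulVec z ∈ ctrlS A B k ∧
            y = x + z}).Nonempty := by
  have htop : ctrlS A B (k + 1) = ⊤ := ctrlS_eq_top_iff.2 hrange
  refine ⟨htop, htop, fun x xhat => ?_⟩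
  obtain ⟨z, hz, s, hs, hzs⟩ := exists_add_eq_add_of_codisjoint (codisjoint_iff.2 htop) x xhat
  exact ⟨x + z, ⟨s, hs, hzs⟩, z, hz, rfl⟩

end Field

/-- If `(A,B)` is a controllable pair with scalar input and `n ≥ 2`, then
`S_{n-1} = ℝⁿ`; equivalently `S_0 + A⁻¹(S_{n-2}) = ℝⁿ`, so for all `x, x̂` the
intersection `(x̂ + S_0) ∩ (x + A⁻¹(S_{n-2}))` is nonempty. -/
theorem stmt_18 {n : ℕ} (hn : 2 ≤ n) (A : Matrix (Fin n) (Fin n) ℝ)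
    (B : Matrix (Fin n) (Fin 1) ℝ)
    (hctrb : (Matrix.of fun (i : Fin n) (j : Fin n) => ((A ^ (j : ℕ)) * B) i 0).rank = n) :
    ctrlS A B (n - 1) = ⊤ ∧
      Submodule.comap A.mulVecLin (ctrlS A B (n - 2)) ⊔ ctrlS A B 0 = ⊤ ∧
      ∀ x xhat : Fin n → ℝ,
        ({y : Fin n → ℝ | ∃ s ∈ ctrlS A B 0, y = xhat + s} ∩
          {y : Fin n → ℝ | ∃ z : Fin n → ℝ, A.mulVec z ∈ ctrlS A B (n - 2) ∧
            y = x + z}).Nonempty := by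
  obtain ⟨k, rfl⟩ := Nat.exists_eq_add_of_le' hn
  exact stmt_18_general <| le_top.trans_eq <| Eq.symm <| reachableSubspace_eq_top_of_rank <| by
    rw [rank_controllabilityMatrix_of_single_input, hctrb, Fintype.card_fin]
end
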